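/- Let F_n be the free group on x_1,…,x_n and let RF_n be the reduced free group. An element w ∈ F_n represents the identity of RF_n if and only if its Magnus expansion has the form E(w) = 1 + (repeated terms), i.e., every monomial X_{i_1}⋯X_{i_m} with pairwise distinct indices i_1,…,i_m has coefficient 0 in E(w). -/

import Mathlib

/-- Coefficient function of the Magnus expansion of a single letter `x_i^{±1}`:
`x_i ↦ 1 + X_i` and `x_i⁻¹ ↦ 1 - X_i + X_i² - ⋯`. -/
def genCoeff {n : ℕ} (i : Fin n) (b : Bool) (l : List (Fin n)) : ℤ :=
  if b then (if l = [] ∨ l = [i] then 1 else 0)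
  else (if l.all (· = i) then (-1) ^ l.length else 0)

/-- Convolution product on coefficient functions of noncommutative power series. -/
def conv {n : ℕ} (f g : List (Fin n) → ℤ) (l : List (Fin n)) : ℤ :=
  ∑ k ∈ Finset.range (l.length + 1), f (l.take k) * g (l.drop k)

/-- Coefficients of the Magnus expansion of a word in the letters `x_i^{±1}`. -/
def wordCoeff {n : ℕ} : List (Fin n × Bool) → List (Fin n) → ℤ
  | [] => fun l => if l = [] then 1 else 0
  | p :: rest => conv (genCoeff p.1 p.2) (wordCoeff rest)

/-- `magnus w l` is the coefficient of the noncommutative monomial `X_{l}` in the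
Magnus expansion `E(w) ∈ ℤ⟨⟨X_1,…,X_n⟩⟩` of the free group element `w`. -/
def magnus {n : ℕ} (w : FreeGroup (Fin n)) (l : List (Fin n)) : ℤ :=
  wordCoeff w.toWord l


/-- The set of relators `[x_i, w⁻¹ x_i w]` (with `[a,b] = a⁻¹b⁻¹ab`) in the free group. -/
def redRelators (n : ℕ) : Set (FreeGroup (Fin n)) :=
  {r | ∃ (i : Fin n) (w : FreeGroup (Fin n)),
    r = (FreeGroup.of i)⁻¹ * (w⁻¹ * FreeGroup.of i * w)⁻¹ *
        FreeGroup.of i * (w⁻¹ * FreeGroup.of i * w)}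

/-- The reduced free group `RF_n`. -/
def RF (n : ℕ) := FreeGroup (Fin n) ⧸ Subgroup.normalClosure (redRelators n)

instance (n : ℕ) : Group (RF n) := by unfold RF; infer_instance

/-!
Call a homomorphism `ρ` from the free group to a ring *reduced* if
`(ρ xᵢ - 1) * ρ g * (ρ xᵢ - 1) = 0` for all `i` and `g`; it then makes `xᵢ` commute with its
conjugates, so it factors through the reduced free group. The reduced Magnus expansion is the orbit
of `1` under the universal example, left multiplication by `1 + Xᵢ` on the free abelian group on
the nonrepeated monomials: sending `X_{i₁}⋯X_{iₘ}` to `(ρ x_{i₁} - 1)⋯(ρ x_{iₘ} - 1)` intertwines it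
with any reduced `ρ`, so a word with trivial reduced expansion is killed by every reduced `ρ`.

For the converse, let `x` be a family in a group `G` whose members commute with their conjugates,
so that the normal closure `N` of `xᵢ` is abelian, and let `y` be `x` with `xᵢ` replaced by `1`.
Then `w ↦ w(x) / w(y)` is a crossed homomorphism to `N`, which turns conjugation on `N` into an
affine action on `N × ℤ`. That action is reduced, so `w(x) = w(y)` for each `w` with trivial reduced
expansion; replacing the members of `x` one after another gives `w(x) = 1`.
-/

section ReducedHom

variable {α S : Type*} [Ring S] {ρ : FreeGroup α →* S}

/-- A homomorphism from a free group to a ring is reduced if the ideal generated by each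
`ρ xᵢ - 1`, inside the subring spanned by the image of `ρ`, has square zero. -/
def IsReducedHom (ρ : FreeGroup α →* S) : Prop :=
  ∀ (i : α) (g : FreeGroup α), (ρ (.of i) - 1) * ρ g * (ρ (.of i) - 1) = 0

theorem IsReducedHom.commute_conj (hρ : IsReducedHom ρ) (i : α) (g : FreeGroup α) :
    Commute (ρ (.of i)) (ρ (g⁻¹ * .of i * g)) := by
  obtain ⟨d, hd⟩ : ∃ d, d = ρ (.of i) - 1 := ⟨_, rfl⟩
  have of_eq : ρ (.of i) = 1 + d := by rw [hd, add_sub_cancel]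
  have conj_eq : ρ (g⁻¹ * .of i * g) = 1 + ρ g⁻¹ * d * ρ g := by
    rw [map_mul, map_mul, of_eq, mul_add, add_mul, mul_one, ← map_mul ρ, inv_mul_cancel, map_one]
  have sandwich (h : FreeGroup α) : d * ρ h * d = 0 := hd ▸ hρ i h
  have hcomm : Commute d (ρ g⁻¹ * d * ρ g) :=
    calc d * (ρ g⁻¹ * d * ρ g) = d * ρ g⁻¹ * d * ρ g := by simp only [mul_assoc]
      _ = ρ g⁻¹ * (d * ρ g * d) := by rw [sandwich, sandwich, zero_mul, mul_zero]
      _ = ρ g⁻¹ * d * ρ g * d := by simp only [mul_assoc]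
  rw [of_eq, conj_eq]
  exact (Commute.one_left _).add_left ((Commute.one_right _).add_right hcomm)

theorem IsReducedHom.eq_one_of_mem_normalClosure {n : ℕ} {ρ : FreeGroup (Fin n) →* S}
    (hρ : IsReducedHom ρ) {w : FreeGroup (Fin n)}
    (hw : w ∈ Subgroup.normalClosure (redRelators n)) : ρ w = 1 := by
  suffices Subgroup.normalClosure (redRelators n) ≤ ρ.ker from this hw
  refine Subgroup.normalClosure_le_normal ?_
  rintro _ ⟨i, g, rfl⟩
  have hcomm := hρ.commute_conj i g
  generalize g⁻¹ * .of i * g = y at hcomm ⊢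
  rw [SetLike.mem_coe, MonoidHom.mem_ker, ← mul_inv_rev, mul_assoc, map_mul, map_mul ρ (.of i),
    hcomm.eq, ← map_mul, ← map_mul, inv_mul_cancel, map_one]

theorem IsReducedHom.mul_prod_eq_zero (hρ : IsReducedHom ρ) {i : α} {l : List α} (hi : i ∈ l) :
    (ρ (.of i) - 1) * (l.map fun j ↦ ρ (.of j) - 1).prod = 0 := by
  suffices ∀ g, (ρ (.of i) - 1) * ρ g * (l.map fun j ↦ ρ (.of j) - 1).prod = 0 by
    simpa using this 1
  induction l with
  | nil => simp at hi
  | cons j l ih =>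
    intro g
    rw [List.map_cons, List.prod_cons, ← mul_assoc]
    obtain rfl | hi := List.mem_cons.1 hi
    · rw [hρ, zero_mul]
    · rw [mul_sub, mul_one, mul_assoc _ (ρ g), ← map_mul, sub_mul, ih hi, ih hi, sub_zero]

end ReducedHom

section ReducedMagnus

variable {α : Type*}

/-- Words without repeated letters, i.e. the nonrepeated monomials `X_{i₁}⋯X_{iₘ}`. -/
abbrev NodupWord (α : Type*) := {l : List α // l.Nodup}

/-- The additive group of the reduced Magnus ring, in which repeated monomials are zero. Over
infinitely many variables its elements are still finite sums. -/
abbrev ReducedSeries (α : Type*) := NodupWord α →₀ ℤ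

/-- The monomial `1`. -/
noncomputable def ReducedSeries.one : ReducedSeries α :=
  Finsupp.single ⟨[], List.nodup_nil⟩ 1

/-- The series all of whose monomials contain `Xᵢ`: the ideal generated by `Xᵢ`. -/
def seriesContaining (i : α) : Submodule ℤ (ReducedSeries α) :=
  Finsupp.supported ℤ ℤ {l | i ∈ l.1}

theorem mem_seriesContaining {i : α} {f : ReducedSeries α} :
    f ∈ seriesContaining i ↔ ∀ l : NodupWord α, i ∉ l.1 → f l = 0 :=
  Finsupp.mem_supported' ℤ f

variable [DecidableEq α]

/-- Left multiplication by the variable `Xᵢ` in the reduced Magnus ring. -/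
noncomputable def leftMulX (i : α) : Module.End ℤ (ReducedSeries α) :=
  Finsupp.linearCombination ℤ fun l ↦
    if h : i ∈ l.1 then 0 else Finsupp.single ⟨i :: l.1, List.nodup_cons.2 ⟨h, l.2⟩⟩ 1

theorem leftMulX_single_of_mem {i : α} {l : NodupWord α} (h : i ∈ l.1) (a : ℤ) :
    leftMulX i (Finsupp.single l a) = 0 := by
  simp [leftMulX, h]

theorem leftMulX_single_of_notMem {i : α} {l : NodupWord α} (h : i ∉ l.1) (a : ℤ) :
    leftMulX i (Finsupp.single l a) =
      Finsupp.single ⟨i :: l.1, List.nodup_cons.2 ⟨h, l.2⟩⟩ a := by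
  simp [leftMulX, h]

theorem leftMulX_apply_nil (i : α) (h : [].Nodup) (f : ReducedSeries α) :
    leftMulX i f ⟨[], h⟩ = 0 := by
  induction f using Finsupp.induction_linear with
  | zero => simp
  | add f g hf hg => rw [map_add, Finsupp.add_apply, hf, hg, add_zero]
  | single l a =>
    by_cases hi : i ∈ l.1
    · simp [leftMulX_single_of_mem hi]
    · simp [leftMulX_single_of_notMem hi]

theorem leftMulX_apply_cons (i j : α) (l : List α) (h : (j :: l).Nodup) (f : ReducedSeries α) :
    leftMulX i f ⟨j :: l, h⟩ = if j = i then f ⟨l, h.of_cons⟩ else 0 := by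
  induction f using Finsupp.induction_linear with
  | zero => simp
  | add f g hf hg =>
    rw [map_add, Finsupp.add_apply, hf, hg, Finsupp.add_apply]
    split_ifs <;> simp
  | single m a =>
    by_cases hi : i ∈ m.1
    · have hm : j = i → m ≠ ⟨l, h.of_cons⟩ := by
        rintro rfl rfl
        exact (List.nodup_cons.1 h).1 hi
      rw [leftMulX_single_of_mem hi]
      split_ifs with hj
      · rw [Finsupp.single_eq_of_ne' (hm hj), Finsupp.zero_apply]
      · rfl
    · rw [leftMulX_single_of_notMem hi]
      simp [Finsupp.single_apply, Subtype.ext_iff, eq_comm, ite_and]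

theorem leftMulX_self_mem_seriesContaining (i : α) (f : ReducedSeries α) :
    leftMulX i f ∈ seriesContaining i := by
  rw [mem_seriesContaining]
  rintro ⟨_ | ⟨j, l⟩, h⟩ hi
  · exact leftMulX_apply_nil i h f
  · rw [leftMulX_apply_cons, if_neg (Ne.symm (List.ne_of_not_mem_cons hi))]

theorem leftMulX_mem_seriesContaining {i : α} {f : ReducedSeries α} (hf : f ∈ seriesContaining i)
    (k : α) : leftMulX k f ∈ seriesContaining i := by
  rw [mem_seriesContaining] at hf ⊢
  rintro ⟨_ | ⟨j, l⟩, h⟩ hi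
  · exact leftMulX_apply_nil k h f
  · rw [leftMulX_apply_cons, hf _ (List.not_mem_of_not_mem_cons hi), ite_self]

theorem leftMulX_eq_zero_of_mem_seriesContaining {i : α} {f : ReducedSeries α}
    (hf : f ∈ seriesContaining i) : leftMulX i f = 0 := by
  rw [mem_seriesContaining] at hf
  ext ⟨_ | ⟨j, l⟩, h⟩
  · exact leftMulX_apply_nil i h f
  · rw [leftMulX_apply_cons]
    split_ifs with hj
    · exact hf _ (hj ▸ (List.nodup_cons.1 h).1)
    · rfl

theorem leftMulX_mul_self (i : α) : leftMulX i * leftMulX i = 0 :=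
  LinearMap.ext fun f ↦
    leftMulX_eq_zero_of_mem_seriesContaining (leftMulX_self_mem_seriesContaining i f)

/-- The unit `1 + Xᵢ`, with inverse `1 - Xᵢ` because `Xᵢ² = 0`. -/
noncomputable def oneAddX (i : α) : (Module.End ℤ (ReducedSeries α))ˣ where
  val := 1 + leftMulX i
  inv := 1 - leftMulX i
  val_inv := by rw [← (Commute.one_left _).mul_self_sub_mul_self_eq, leftMulX_mul_self]; simp
  inv_val := by rw [← (Commute.one_left _).mul_self_sub_mul_self_eq', leftMulX_mul_self]; simp

/-- Left multiplication by the reduced Magnus expansion. -/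
noncomputable def reducedMagnusRep : FreeGroup α →* Module.End ℤ (ReducedSeries α) :=
  (Units.coeHom _).comp (FreeGroup.lift oneAddX)

theorem reducedMagnusRep_of (i : α) : reducedMagnusRep (.of i) = 1 + leftMulX i := by
  simp [reducedMagnusRep, oneAddX]

theorem reducedMagnusRep_of_inv (i : α) : reducedMagnusRep (.of i)⁻¹ = 1 - leftMulX i := by
  simp [reducedMagnusRep, oneAddX]

theorem reducedMagnusRep_mem_seriesContaining (g : FreeGroup α) {i : α} {f : ReducedSeries α}
    (hf : f ∈ seriesContaining i) : reducedMagnusRep g f ∈ seriesContaining i := by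
  induction g using FreeGroup.induction_on generalizing f with
  | C1 => simpa using hf
  | of k =>
    rw [reducedMagnusRep_of]
    exact add_mem hf (leftMulX_mem_seriesContaining hf k)
  | inv_of k _ =>
    rw [reducedMagnusRep_of_inv]
    exact sub_mem hf (leftMulX_mem_seriesContaining hf k)
  | mul g h hg hh =>
    rw [map_mul]
    exact hg (hh hf)

theorem isReducedHom_reducedMagnusRep : IsReducedHom (reducedMagnusRep (α := α)) := by
  intro i g
  rw [reducedMagnusRep_of, add_sub_cancel_left]
  exact LinearMap.ext fun f ↦ leftMulX_eq_zero_of_mem_seriesContaining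
    (reducedMagnusRep_mem_seriesContaining g (leftMulX_self_mem_seriesContaining i f))

/-- The reduced Magnus expansion of `w`, obtained from the Magnus expansion by dropping all
repeated monomials. -/
noncomputable def reducedMagnus (w : FreeGroup α) : ReducedSeries α :=
  reducedMagnusRep w .one

theorem reducedMagnus_mk_cons (i : α) (b : Bool) (L : List (α × Bool)) :
    reducedMagnus (.mk ((i, b) :: L)) = reducedMagnus (.mk L) +
      if b then leftMulX i (reducedMagnus (.mk L)) else -leftMulX i (reducedMagnus (.mk L)) := by
  have hmul : FreeGroup.mk ((i, b) :: L) = .mk [(i, b)] * .mk L := by simp [FreeGroup.mul_mk]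
  rw [reducedMagnus, hmul, map_mul, Module.End.mul_apply, ← reducedMagnus]
  cases b
  · have hinv : FreeGroup.mk [(i, false)] = (.of i)⁻¹ := by
      simp [FreeGroup.of, FreeGroup.inv_mk, FreeGroup.invRev]
    simp [hinv, reducedMagnusRep_of_inv, sub_eq_add_neg]
  · rw [← FreeGroup.of, reducedMagnusRep_of]
    rfl

end ReducedMagnus

section Universality

variable {α S : Type*} [Ring S] {ρ : FreeGroup α →* S}

/-- The additive map sending the monomial `X_{i₁}⋯X_{iₘ}` to `(ρ x_{i₁} - 1)⋯(ρ x_{iₘ} - 1)`. -/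
noncomputable def evalSeries (ρ : FreeGroup α →* S) : ReducedSeries α →ₗ[ℤ] S :=
  Finsupp.linearCombination ℤ fun l ↦ (l.1.map fun i ↦ ρ (.of i) - 1).prod

theorem evalSeries_one (ρ : FreeGroup α →* S) : evalSeries ρ .one = 1 := by
  simp [evalSeries, ReducedSeries.one]

variable [DecidableEq α]

theorem IsReducedHom.evalSeries_leftMulX (hρ : IsReducedHom ρ) (i : α) (f : ReducedSeries α) :
    evalSeries ρ (leftMulX i f) = (ρ (.of i) - 1) * evalSeries ρ f := by
  induction f using Finsupp.induction_linear with
  | zero => simp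
  | add f g hf hg => simp only [map_add, hf, hg, mul_add]
  | single l a =>
    by_cases hi : i ∈ l.1
    · simp [leftMulX_single_of_mem hi, evalSeries, hρ.mul_prod_eq_zero hi, -zsmul_eq_mul]
    · simp [leftMulX_single_of_notMem hi, evalSeries, -zsmul_eq_mul]

theorem IsReducedHom.evalSeries_reducedMagnusRep (hρ : IsReducedHom ρ) (g : FreeGroup α)
    (f : ReducedSeries α) : evalSeries ρ (reducedMagnusRep g f) = ρ g * evalSeries ρ f := by
  induction g using FreeGroup.induction_on generalizing f with
  | C1 => simp
  | of i => simp [reducedMagnusRep_of, hρ.evalSeries_leftMulX, sub_mul]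
  | inv_of i ih =>
    calc evalSeries ρ (reducedMagnusRep (.of i)⁻¹ f)
      _ = ρ (.of i)⁻¹ * (ρ (.of i) * evalSeries ρ (reducedMagnusRep (.of i)⁻¹ f)) := by
        rw [← mul_assoc, ← map_mul, inv_mul_cancel, map_one, one_mul]
      _ = ρ (.of i)⁻¹ * evalSeries ρ f := by
        rw [← ih, ← Module.End.mul_apply, ← map_mul, mul_inv_cancel, map_one, Module.End.one_apply]
  | mul g h hg hh => rw [map_mul, Module.End.mul_apply, hg, hh, map_mul, mul_assoc]

theorem IsReducedHom.eq_one_of_reducedMagnus_eq_one (hρ : IsReducedHom ρ) {w : FreeGroup α}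
    (hw : reducedMagnus w = .one) : ρ w = 1 := by
  have h := hρ.evalSeries_reducedMagnusRep w .one
  rwa [← reducedMagnus, hw, evalSeries_one, mul_one, eq_comm] at h

end Universality

section AffineExtension

variable {H A : Type*} [Monoid H] [AddCommGroup A] (c : H →* AddMonoid.End A) (ψ : H → A)
  (hψ : ∀ g h, ψ (g * h) = c g (ψ h) + ψ g)

/-- The action `g • (a, k) = (g • a + k • ψ g, k)` on `A × ℤ` determined by an action `c` on `A`
and a crossed homomorphism `ψ`. -/
def affineExtension : H →* AddMonoid.End (A × ℤ) where
  toFun g := ((c g).coprod (zmultiplesHom A (ψ g))).prod (AddMonoidHom.snd A ℤ)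
  map_one' := by
    have hψ_one : ψ 1 = 0 := by simpa using hψ 1 1
    refine AddMonoidHom.ext fun p ↦ Prod.ext ?_ rfl
    change c 1 p.1 + p.2 • ψ 1 = p.1
    simp [hψ_one]
  map_mul' g h := by
    refine AddMonoidHom.ext fun p ↦ Prod.ext ?_ rfl
    change c (g * h) p.1 + p.2 • ψ (g * h) = c g (c h p.1 + p.2 • ψ h) + p.2 • ψ g
    rw [hψ, map_mul, AddMonoid.End.coe_mul, Function.comp_apply, map_add, map_zsmul, smul_add,
      add_assoc]

theorem affineExtension_apply (g : H) (p : A × ℤ) :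
    affineExtension c ψ hψ g p = (c g p.1 + p.2 • ψ g, p.2) :=
  rfl

end AffineExtension

section Conjugation

variable {α H G : Type*} [Monoid H] [Group G] {N : Subgroup G}

/-- The conjugation action of a group on a normal subgroup, written additively. -/
def conjEnd (N : Subgroup G) [N.Normal] : G →* AddMonoid.End (Additive N) :=
  (monoidEndToAdditive N).toMonoidHom.comp
    ((MulDistribMulAction.toMonoidEnd (ConjAct G) N).comp ConjAct.toConjAct.toMonoidHom)

theorem coe_toMul_conjEnd [N.Normal] (g : G) (a : Additive N) :
    ((conjEnd N g a).toMul : G) = g * a.toMul * g⁻¹ :=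
  rfl

/-- The crossed homomorphism `g ↦ f g / f' g` measuring the difference of two homomorphisms that
agree modulo a normal subgroup. -/
def homDiff {f f' : H →* G} (h : ∀ g, f g / f' g ∈ N) (g : H) : Additive N :=
  .ofMul ⟨f g / f' g, h g⟩

theorem coe_toMul_homDiff {f f' : H →* G} (h : ∀ g, f g / f' g ∈ N) (g : H) :
    ((homDiff h g).toMul : G) = f g / f' g :=
  rfl

theorem homDiff_mul [N.Normal] {f f' : H →* G} (h : ∀ g, f g / f' g ∈ N) (g k : H) :
    homDiff h (g * k) = conjEnd N (f g) (homDiff h k) + homDiff h g := by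
  refine Additive.toMul.injective (Subtype.ext ?_)
  rw [toMul_add, Subgroup.coe_mul, coe_toMul_conjEnd]
  simp only [coe_toMul_homDiff, map_mul, div_eq_mul_inv]
  group

theorem freeGroup_lift_div_lift_mem [N.Normal] {x y : α → G} (h : ∀ i, x i / y i ∈ N)
    (w : FreeGroup α) : FreeGroup.lift x w / FreeGroup.lift y w ∈ N := by
  have heq : (QuotientGroup.mk' N).comp (FreeGroup.lift x) =
      (QuotientGroup.mk' N).comp (FreeGroup.lift y) := by
    ext i
    simpa [QuotientGroup.eq_iff_div_mem] using h i
  exact QuotientGroup.eq_iff_div_mem.1 (DFunLike.congr_fun heq w)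

theorem isMulCommutative_normalClosure_singleton {x : G} (h : ∀ g, Commute x (g⁻¹ * x * g)) :
    IsMulCommutative (Subgroup.normalClosure {x}) := by
  refine Subgroup.isMulCommutative_closure fun a ha b hb ↦ ?_
  simp only [Group.mem_conjugatesOfSet_iff, Set.mem_singleton_iff, exists_eq_left, isConj_iff]
    at ha hb
  obtain ⟨g, rfl⟩ := ha
  obtain ⟨k, rfl⟩ := hb
  have hconj := (Commute.conj_iff g).2 (h (k⁻¹ * g))
  rwa [show g * ((k⁻¹ * g)⁻¹ * x * (k⁻¹ * g)) * g⁻¹ = k * x * k⁻¹ by group] at hconj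

end Conjugation

section AbelianNormalClosures

open scoped IsMulCommutative

open Subgroup (normalClosure)

variable {α G : Type*} [Group G] {N : Subgroup G} [N.Normal] [IsMulCommutative N] {x y : α → G}

/-- The affine action on `N × ℤ` of the free group, through conjugation by `w(x)` and
the crossed homomorphism `w ↦ w(x) / w(y)`. -/
def conjAffine (hN : ∀ i, x i / y i ∈ N) : FreeGroup α →* AddMonoid.End (Additive N × ℤ) :=
  affineExtension ((conjEnd N).comp (FreeGroup.lift x)) (homDiff (freeGroup_lift_div_lift_mem hN))
    (homDiff_mul _)

theorem conjAffine_apply (hN : ∀ i, x i / y i ∈ N) (w : FreeGroup α) (p : Additive N × ℤ) :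
    conjAffine hN w p = (conjEnd N (FreeGroup.lift x w) p.1 +
      p.2 • homDiff (freeGroup_lift_div_lift_mem hN) w, p.2) :=
  affineExtension_apply _ _ _ w p

theorem conjAffine_of_apply_of_mem_normalClosure {i : α}
    [IsMulCommutative (normalClosure {x i})] (hN : ∀ i, x i / y i ∈ N) {a : Additive N}
    (ha : (a.toMul : G) ∈ normalClosure {x i}) : conjAffine hN (.of i) (a, 0) = (a, 0) := by
  have hcomm : x i * a.toMul = a.toMul * x i :=
    setLike_mul_comm (Subgroup.subset_normalClosure (Set.mem_singleton _)) ha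
  have hfix : conjEnd N (x i) a = a := Additive.toMul.injective <| Subtype.ext <| by
    rw [coe_toMul_conjEnd, hcomm, mul_inv_cancel_right]
  simp [conjAffine_apply, hfix]

theorem exists_conjAffine_of_sub_one_apply (hN : ∀ i, x i / y i ∈ N) {i : α}
    (hxy : x i / y i ∈ normalClosure {x i}) (p : Additive N × ℤ) :
    ∃ a : Additive N, (a.toMul : G) ∈ normalClosure {x i} ∧
      (conjAffine hN (.of i) - 1) p = (a, 0) := by
  have x_mem : x i ∈ normalClosure {x i} := Subgroup.subset_normalClosure rfl
  refine ⟨conjEnd N (x i) p.1 - p.1 +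
    p.2 • homDiff (freeGroup_lift_div_lift_mem hN) (.of i), ?_, ?_⟩
  · have comm_mem : x i * p.1.toMul * (x i)⁻¹ * (p.1.toMul : G)⁻¹ ∈ normalClosure {x i} := by
      rw [mul_assoc, mul_assoc, ← mul_assoc (p.1.toMul : G)]
      exact mul_mem x_mem (Subgroup.normalClosure_normal.conj_mem _ (inv_mem x_mem) _)
    rw [toMul_add, toMul_sub, toMul_zsmul, Subgroup.coe_mul, Subgroup.coe_div, Subgroup.coe_zpow,
      coe_toMul_conjEnd, coe_toMul_homDiff, FreeGroup.lift_apply_of, FreeGroup.lift_apply_of,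
      div_eq_mul_inv]
    exact mul_mem comm_mem (zpow_mem hxy _)
  · change conjAffine hN (.of i) p - p = _
    rw [conjAffine_apply, FreeGroup.lift_apply_of]
    exact Prod.ext (add_sub_right_comm _ _ _) (sub_self _)

theorem isReducedHom_conjAffine (hx : ∀ i, IsMulCommutative (normalClosure {x i}))
    (hN : ∀ i, x i / y i ∈ N) (hxy : ∀ i, x i / y i ∈ normalClosure {x i}) :
    IsReducedHom (conjAffine hN) := by
  refine fun i g ↦ AddMonoidHom.ext fun p ↦ ?_
  obtain ⟨a, ha, hp⟩ := exists_conjAffine_of_sub_one_apply hN (hxy i) p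
  have conj_mem : ((conjEnd N (FreeGroup.lift x g) a).toMul : G) ∈ normalClosure {x i} :=
    Subgroup.normalClosure_normal.conj_mem _ ha _
  change (conjAffine hN (.of i) - 1) (conjAffine hN g ((conjAffine hN (.of i) - 1) p)) = 0
  rw [hp, conjAffine_apply, zero_smul, add_zero]
  exact sub_eq_zero.2 (conjAffine_of_apply_of_mem_normalClosure hN conj_mem)

theorem lift_eq_lift_of_reducedMagnus_eq_one [DecidableEq α]
    (hx : ∀ i, IsMulCommutative (normalClosure {x i}))
    (hN : ∀ i, x i / y i ∈ N) (hxy : ∀ i, x i / y i ∈ normalClosure {x i}) {w : FreeGroup α}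
    (hw : reducedMagnus w = .one) : FreeGroup.lift x w = FreeGroup.lift y w := by
  have h := (isReducedHom_conjAffine hx hN hxy).eq_one_of_reducedMagnus_eq_one hw
  have hdiff : homDiff (freeGroup_lift_div_lift_mem hN) w = 0 := by
    simpa [conjAffine_apply] using congrArg Prod.fst (DFunLike.congr_fun h (0, 1))
  rw [← div_eq_one, ← coe_toMul_homDiff (freeGroup_lift_div_lift_mem hN), hdiff]
  rfl

end AbelianNormalClosures

section Elimination

open Subgroup (normalClosure)

variable {α G : Type*} [Group G] {x : α → G}

theorem freeGroup_lift_mk_eq_one {L : List (α × Bool)} (h : ∀ p ∈ L, x p.1 = 1) :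
    FreeGroup.lift x (FreeGroup.mk L) = 1 := by
  rw [FreeGroup.lift_mk]
  refine List.prod_eq_one fun g hg ↦ ?_
  obtain ⟨p, hp, rfl⟩ := List.mem_map.1 hg
  simp [h p hp]

variable [DecidableEq α]

theorem isMulCommutative_normalClosure_update_one
    (hx : ∀ i, IsMulCommutative (normalClosure {x i})) (i j : α) :
    IsMulCommutative (normalClosure {Function.update x i 1 j}) := by
  obtain rfl | hj := eq_or_ne j i
  · exact isMulCommutative_normalClosure_singleton (by simp)
  · rw [Function.update_of_ne hj]
    exact hx j

theorem lift_update_one_of_reducedMagnus_eq_one (hx : ∀ i, IsMulCommutative (normalClosure {x i}))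
    (i : α) {w : FreeGroup α} (hw : reducedMagnus w = .one) :
    FreeGroup.lift (Function.update x i 1) w = FreeGroup.lift x w := by
  have := hx i
  have hdiv (j : α) :
      x j / Function.update x i 1 j ∈ normalClosure {x i} ⊓ normalClosure {x j} := by
    obtain rfl | hj := eq_or_ne j i
    · rw [Function.update_self, div_one, inf_idem]
      exact Subgroup.subset_normalClosure rfl
    · rw [Function.update_of_ne hj, div_self']
      exact one_mem _
  exact (lift_eq_lift_of_reducedMagnus_eq_one hx (fun j ↦ (hdiv j).1) (fun j ↦ (hdiv j).2) hw).symm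

theorem lift_piecewise_one_of_reducedMagnus_eq_one
    (hx : ∀ i, IsMulCommutative (normalClosure {x i})) {w : FreeGroup α}
    (hw : reducedMagnus w = .one) (s : Finset α) :
    FreeGroup.lift (s.piecewise (fun _ ↦ 1) x) w = FreeGroup.lift x w := by
  suffices (∀ i, IsMulCommutative (normalClosure {s.piecewise (fun _ ↦ 1) x i})) ∧
      FreeGroup.lift (s.piecewise (fun _ ↦ 1) x) w = FreeGroup.lift x w from this.2
  induction s using Finset.induction_on with
  | empty =>
    rw [Finset.piecewise_empty]
    exact ⟨hx, rfl⟩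
  | insert i s _ ih =>
    rw [Finset.piecewise_insert]
    exact ⟨isMulCommutative_normalClosure_update_one ih.1 i,
      (lift_update_one_of_reducedMagnus_eq_one ih.1 i hw).trans ih.2⟩

theorem lift_eq_one_of_reducedMagnus_eq_one (hx : ∀ i, IsMulCommutative (normalClosure {x i}))
    {w : FreeGroup α} (hw : reducedMagnus w = .one) : FreeGroup.lift x w = 1 := by
  obtain ⟨L, rfl⟩ := Quot.exists_rep w
  rw [← lift_piecewise_one_of_reducedMagnus_eq_one hx hw (L.map Prod.fst).toFinset]
  refine freeGroup_lift_mk_eq_one fun p hp ↦ Finset.piecewise_eq_of_mem _ _ _ ?_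
  exact List.mem_toFinset.2 (List.mem_map_of_mem hp)

end Elimination

section Coefficients

variable {n : ℕ}

theorem conv_genCoeff_nil (i : Fin n) (b : Bool) (f : List (Fin n) → ℤ) :
    conv (genCoeff i b) f [] = f [] := by
  cases b <;> simp [conv, genCoeff]

theorem genCoeff_cons_cons_of_ne (i : Fin n) (b : Bool) {j k : Fin n} (h : j ≠ k)
    (l : List (Fin n)) : genCoeff i b (j :: k :: l) = 0 := by
  have hne : j = i → k ≠ i := fun hj hk ↦ h (hj.trans hk.symm)
  cases b
  · simpa [genCoeff] using fun hj hk ↦ absurd hk (hne hj)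
  · simp [genCoeff]

theorem conv_genCoeff_cons (i : Fin n) (b : Bool) (f : List (Fin n) → ℤ) {j : Fin n}
    {l : List (Fin n)} (h : (j :: l).Nodup) :
    conv (genCoeff i b) f (j :: l) =
      f (j :: l) + if j = i then (if b then f l else -f l) else 0 := by
  have higher_eq_zero : ∀ t ∈ Finset.range l.length,
      genCoeff i b ((j :: l).take (t + 1 + 1)) * f ((j :: l).drop (t + 1 + 1)) = 0 := by
    intro t ht
    cases l with
    | nil => simp at ht
    | cons k l =>
      have hjk : j ≠ k := List.ne_of_not_mem_cons (List.nodup_cons.1 h).1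
      rw [List.take_succ_cons, List.take_succ_cons, genCoeff_cons_cons_of_ne i b hjk, zero_mul]
  rw [conv, List.length_cons, Finset.sum_range_succ', Finset.sum_range_succ',
    Finset.sum_eq_zero higher_eq_zero]
  by_cases hj : j = i <;> cases b <;> simp [genCoeff, hj, add_comm]

theorem wordCoeff_nil (L : List (Fin n × Bool)) : wordCoeff L [] = 1 := by
  induction L with
  | nil => rfl
  | cons p L ih => rw [wordCoeff, conv_genCoeff_nil, ih]

theorem reducedMagnus_mk_apply (L : List (Fin n × Bool)) (l : NodupWord (Fin n)) :
    reducedMagnus (.mk L) l = wordCoeff L l.1 := by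
  induction L generalizing l with
  | nil =>
    rw [reducedMagnus, ← FreeGroup.one_eq_mk, map_one]
    simp [wordCoeff, Finsupp.single_apply, ReducedSeries.one, Subtype.ext_iff, eq_comm]
  | cons p L ih =>
    obtain ⟨i, b⟩ := p
    rw [reducedMagnus_mk_cons, Finsupp.add_apply, ih, wordCoeff]
    obtain ⟨_ | ⟨j, l⟩, h⟩ := l
    · rw [conv_genCoeff_nil]
      cases b <;> simp [leftMulX_apply_nil]
    · rw [conv_genCoeff_cons i b _ h]
      cases b <;> simp [leftMulX_apply_cons, ih, apply_ite Neg.neg]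

theorem reducedMagnus_apply (w : FreeGroup (Fin n)) (l : NodupWord (Fin n)) :
    reducedMagnus w l = magnus w l.1 := by
  rw [magnus, ← reducedMagnus_mk_apply, FreeGroup.mk_toWord]

theorem magnus_nil (w : FreeGroup (Fin n)) : magnus w [] = 1 :=
  wordCoeff_nil _

theorem reducedMagnus_eq_one_iff (w : FreeGroup (Fin n)) :
    reducedMagnus w = .one ↔
      ∀ l : List (Fin n), l ≠ [] → l.Nodup → magnus w l = 0 := by
  have one_apply (l : List (Fin n)) (h : l.Nodup) (hl : l ≠ []) :
      ReducedSeries.one ⟨l, h⟩ = 0 :=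
    Finsupp.single_eq_of_ne fun heq ↦ hl (congrArg Subtype.val heq)
  constructor
  · intro hw l hl h
    rw [← reducedMagnus_apply w ⟨l, h⟩, hw, one_apply l h hl]
  · intro hw
    ext ⟨l, h⟩
    rw [reducedMagnus_apply]
    obtain rfl | hl := eq_or_ne l []
    · exact (magnus_nil w).trans Finsupp.single_eq_same.symm
    · rw [hw l hl h, one_apply l h hl]

end Coefficients

theorem isMulCommutative_normalClosure_mk_of {n : ℕ} (i : Fin n) :
    IsMulCommutative (Subgroup.normalClosure
      {QuotientGroup.mk' (Subgroup.normalClosure (redRelators n)) (.of i)}) := by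
  refine isMulCommutative_normalClosure_singleton fun g ↦ ?_
  obtain ⟨g, rfl⟩ := QuotientGroup.mk'_surjective _ g
  rw [← map_inv, ← map_mul, ← map_mul, Commute, SemiconjBy, ← map_mul, ← map_mul, eq_comm]
  refine QuotientGroup.eq.2 (Subgroup.subset_normalClosure ⟨i, g, ?_⟩)
  group

/-- w represents the identity of the reduced free group RF_n iff every
non-repeated monomial (pairwise distinct indices) of positive degree has
coefficient 0 in E(w). -/
theorem reduced_magnus_injective {n : ℕ} (w : FreeGroup (Fin n)) :
    w ∈ Subgroup.normalClosure (redRelators n) ↔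
      ∀ l : List (Fin n), l ≠ [] → l.Nodup → magnus w l = 0 := by
  rw [← reducedMagnus_eq_one_iff]
  constructor
  · intro hw
    rw [reducedMagnus, isReducedHom_reducedMagnusRep.eq_one_of_mem_normalClosure hw,
      Module.End.one_apply]
  · intro hw
    have hquot : QuotientGroup.mk' (Subgroup.normalClosure (redRelators n)) w = 1 :=
      (FreeGroup.lift_unique _ fun _ ↦ rfl).trans
        (lift_eq_one_of_reducedMagnus_eq_one isMulCommutative_normalClosure_mk_of hw)
    exact (QuotientGroup.eq_one_iff w).1 hquot
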